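/- For every E > 0, the outgoing and incoming tails Γ_-(E) and Γ_+(E) are closed subsets of ℝⁿ × ℝⁿ. -/

import Mathlib

open Filter Set
open scoped Topology RealInnerProductSpace

noncomputable section

/-- The phase space `ℝⁿ × ℝⁿ`. -/
abbrev Phase (n : ℕ) : Type := EuclideanSpace ℝ (Fin n) × EuclideanSpace ℝ (Fin n)

/-- The classical Hamiltonian `p(x, ξ) = ‖ξ‖² + V(x)`. -/
def ham {n : ℕ} (V : EuclideanSpace ℝ (Fin n) → ℝ) (ρ : Phase n) : ℝ :=
  ‖ρ.2‖ ^ 2 + V ρ.1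

/-- The Hamiltonian vector field `H_p(x, ξ) = (2ξ, -∇V(x))`. -/
def hamVF {n : ℕ} (V : EuclideanSpace ℝ (Fin n) → ℝ) (ρ : Phase n) : Phase n :=
  ((2 : ℝ) • ρ.2, -gradient V ρ.1)

/-- `Φ` is the (complete) flow of the Hamiltonian vector field `H_p`:
it starts at the identity, satisfies the group law, and each curve
`t ↦ Φ t ρ` is an integral curve of `H_p`. -/
def IsHamFlow {n : ℕ} (V : EuclideanSpace ℝ (Fin n) → ℝ)
    (Φ : ℝ → Phase n → Phase n) : Prop :=
  (∀ ρ, Φ 0 ρ = ρ) ∧ (∀ s t ρ, Φ (s + t) ρ = Φ s (Φ t ρ)) ∧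
    ∀ ρ t, HasDerivAt (fun s => Φ s ρ) (hamVF V (Φ t ρ)) t

/-- The outgoing tail `Γ₋(E)`: points of the energy surface whose forward
trajectory does not escape to infinity. -/
def GammaMinus {n : ℕ} (V : EuclideanSpace ℝ (Fin n) → ℝ)
    (Φ : ℝ → Phase n → Phase n) (E : ℝ) : Set (Phase n) :=
  {ρ | ham V ρ = E ∧ ¬ Tendsto (fun t => ‖Φ t ρ‖) atTop atTop}

/-- The incoming tail `Γ₊(E)`: points of the energy surface whose backward
trajectory does not escape to infinity. -/
def GammaPlus {n : ℕ} (V : EuclideanSpace ℝ (Fin n) → ℝ)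
    (Φ : ℝ → Phase n → Phase n) (E : ℝ) : Set (Phase n) :=
  {ρ | ham V ρ = E ∧ ¬ Tendsto (fun t => ‖Φ t ρ‖) atBot atTop}

/-- The trapped set `K(E) = Γ₋(E) ∩ Γ₊(E)`. -/
def trappedSet {n : ℕ} (V : EuclideanSpace ℝ (Fin n) → ℝ)
    (Φ : ℝ → Phase n → Phase n) (E : ℝ) : Set (Phase n) :=
  GammaMinus V Φ E ∩ GammaPlus V Φ E

lemma grad_lip {n : ℕ} (V : EuclideanSpace ℝ (Fin n) → ℝ) (hV : ContDiff ℝ (⊤ : ℕ∞) V)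
    (hVsupp : HasCompactSupport V) : ∃ K, LipschitzWith K (hamVF V) := by
  have h1 : ContDiff ℝ 1 (fderiv ℝ V) :=
    (hV.of_le (m := 2) (WithTop.coe_le_coe.2 (le_top : (2 : ℕ∞) ≤ ⊤))).fderiv_right (by norm_num)
  obtain ⟨C, hC⟩ := ContDiff.lipschitzWith_of_hasCompactSupport (hVsupp.fderiv ℝ) h1 (by simp)
  have h2 : LipschitzWith (1 * C) (gradient V) :=
    (InnerProductSpace.toDual ℝ (EuclideanSpace ℝ (Fin n))).symm.lipschitz.comp hC
  have h3 := (h2.comp (LipschitzWith.prod_fst (α := EuclideanSpace ℝ (Fin n))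
    (β := EuclideanSpace ℝ (Fin n)))).neg
  have h4 := (lipschitzWith_smul (β := EuclideanSpace ℝ (Fin n)) (2 : ℝ)).comp
    (LipschitzWith.prod_snd (α := EuclideanSpace ℝ (Fin n)) (β := EuclideanSpace ℝ (Fin n)))
  exact ⟨_, h4.prodMk h3⟩

lemma grad_zero {n : ℕ} (V : EuclideanSpace ℝ (Fin n) → ℝ)
    (hVsupp : HasCompactSupport V) : ∃ R : ℝ, 0 ≤ R ∧ ∀ x, R < ‖x‖ → gradient V x = 0 := by
  obtain ⟨R, hR⟩ := hVsupp.isBounded.subset_closedBall 0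
  refine ⟨max R 0, le_max_right _ _, fun x hx => ?_⟩
  have hx' : x ∉ tsupport V := fun h => by
    have := hR h
    rw [mem_closedBall_zero_iff] at this
    exact absurd (lt_of_le_of_lt (le_max_left _ _) hx) (not_lt.2 this)
  have : fderiv ℝ V x = 0 := by
    by_contra h
    exact hx' (support_fderiv_subset ℝ h)
  simp [gradient, this]

lemma ham_const {n : ℕ} (V : EuclideanSpace ℝ (Fin n) → ℝ) (hV : ContDiff ℝ (⊤ : ℕ∞) V)
    (Φ : ℝ → Phase n → Phase n) (hΦ : IsHamFlow V Φ) (ρ : Phase n) (t : ℝ) :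
    ham V (Φ t ρ) = ham V ρ := by
  have hd : ∀ s, HasDerivAt (fun s => ham V (Φ s ρ)) 0 s := by
    intro s
    have h := hΦ.2.2 ρ s
    have h1 : HasDerivAt (fun s => (Φ s ρ).1) _ s := h.fst
    have h2 : HasDerivAt (fun s => (Φ s ρ).2) _ s := h.snd
    have hg := (hV.differentiable (by simp) (Φ s ρ).1).hasFDerivAt
    have h3 := hg.comp_hasDerivAt s h1
    have h4 := h2.norm_sq.add h3
    refine h4.congr_deriv ?_
    have : fderiv ℝ V (Φ s ρ).1 = InnerProductSpace.toDual ℝ _ (gradient V (Φ s ρ).1) := by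
      rw [toDual_gradient]
    rw [this]
    simp [hamVF, inner_smul_right, real_inner_comm]
  have := is_const_of_deriv_eq_zero (fun s => (hd s).differentiableAt) (fun s => (hd s).deriv) t 0
  simpa [hΦ.1] using this

lemma flow_cont {n : ℕ} (V : EuclideanSpace ℝ (Fin n) → ℝ) (hV : ContDiff ℝ (⊤ : ℕ∞) V)
    (hVsupp : HasCompactSupport V)
    (Φ : ℝ → Phase n → Phase n) (hΦ : IsHamFlow V Φ) (t : ℝ) (ht : 0 ≤ t) :
    Continuous (Φ t) := by
  obtain ⟨K, hK⟩ := grad_lip V hV hVsupp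
  have hc : ∀ ρ, Continuous (fun s => Φ s ρ) := fun ρ =>
    continuous_iff_continuousAt.2 fun s => (hΦ.2.2 ρ s).continuousAt
  refine (LipschitzWith.of_dist_le_mul (K := ⟨Real.exp (K * t), (Real.exp_pos _).le⟩)
    fun ρ ρ' => ?_).continuous
  have := dist_le_of_trajectories_ODE (v := fun _ => hamVF V) (fun _ => hK)
    (hc ρ).continuousOn (fun s _ => (hΦ.2.2 ρ s).hasDerivWithinAt)
    (hc ρ').continuousOn (fun s _ => (hΦ.2.2 ρ' s).hasDerivWithinAt)
    (a := 0) (b := t) le_rfl t ⟨ht, le_rfl⟩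
  simp only [hΦ.1, sub_zero] at this
  rw [mul_comm]
  exact this

lemma free_escape {n : ℕ} (V : EuclideanSpace ℝ (Fin n) → ℝ) (hV : ContDiff ℝ (⊤ : ℕ∞) V)
    (hVsupp : HasCompactSupport V)
    (Φ : ℝ → Phase n → Phase n) (hΦ : IsHamFlow V Φ) (R : ℝ) (hR0 : 0 ≤ R)
    (hR : ∀ x, R < ‖x‖ → gradient V x = 0) (ρ : Phase n) (h1 : R < ‖ρ.1‖)
    (h2 : 0 < ⟪ρ.1, ρ.2⟫) :
    Tendsto (fun t => ‖Φ t ρ‖) atTop atTop := by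
  obtain ⟨K, hK⟩ := grad_lip V hV hVsupp
  have hc : Continuous (fun s => Φ s ρ) :=
    continuous_iff_continuousAt.2 fun s => (hΦ.2.2 ρ s).continuousAt
  set c : ℝ → Phase n := fun t => (ρ.1 + (2 * t) • ρ.2, ρ.2) with hcdef
  have hcd : ∀ t, HasDerivAt c ((2 : ℝ) • ρ.2, 0) t := by
    intro t
    refine HasDerivAt.prodMk ?_ (hasDerivAt_const _ _)
    have := (((hasDerivAt_id t).const_mul 2).smul_const ρ.2).const_add ρ.1
    simpa using this
  have hbig : ∀ t : ℝ, 0 ≤ t → R < ‖ρ.1 + (2 * t) • ρ.2‖ := by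
    intro t ht
    refine lt_of_lt_of_le h1 ?_
    refine (sq_le_sq₀ (norm_nonneg _) (norm_nonneg _)).1 ?_
    rw [norm_add_sq_real, inner_smul_right]
    have : 0 ≤ (2 * t) * ⟪ρ.1, ρ.2⟫ := by positivity
    nlinarith [sq_nonneg ‖(2 * t) • ρ.2‖]
  have heq : ∀ t, 0 ≤ t → Φ t ρ = c t := by
    intro t ht
    refine ODE_solution_unique (v := fun _ => hamVF V) (fun _ => hK) (a := 0) (b := t)
      hc.continuousOn (fun s _ => (hΦ.2.2 ρ s).hasDerivWithinAt) (g := c)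
      (fun s _ => (hcd s).continuousAt.continuousWithinAt) (fun s hs => ?_) ?_ ⟨ht, le_rfl⟩
    · have := hR _ (hbig s hs.1)
      refine ((hcd s).congr_deriv ?_).hasDerivWithinAt
      simp [hamVF, hcdef, this]
    · simp [hΦ.1, hcdef]
  have hξ : 0 < ‖ρ.2‖ := by
    rw [norm_pos_iff]
    intro h
    simp [h] at h2
  have hlin : Tendsto (fun t : ℝ => t * (2 * ‖ρ.2‖) + (-‖ρ.1‖)) atTop atTop :=
    tendsto_atTop_add_const_right _ _ (tendsto_id.atTop_mul_const (by positivity))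
  refine tendsto_atTop_mono' _ ?_ hlin
  filter_upwards [eventually_ge_atTop 0] with t ht
  rw [heq t ht]
  refine le_trans ?_ (norm_fst_le _)
  have h5 := norm_sub_le (ρ.1 + (2 * t) • ρ.2) ρ.1
  rw [add_sub_cancel_left, norm_smul, Real.norm_of_nonneg (by positivity)] at h5
  simp only [hcdef]
  linarith

lemma closed_minus {n : ℕ}
    (V : EuclideanSpace ℝ (Fin n) → ℝ) (hV : ContDiff ℝ (⊤ : ℕ∞) V)
    (hVsupp : HasCompactSupport V)
    (Φ : ℝ → Phase n → Phase n) (hΦ : IsHamFlow V Φ)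
    (E : ℝ) : IsClosed (GammaMinus V Φ E) := by
  obtain ⟨R, hR0, hR⟩ := grad_zero V hVsupp
  have hcham : Continuous (ham V) := by
    have := hV.continuous
    unfold ham
    fun_prop
  rw [← isOpen_compl_iff, isOpen_iff_mem_nhds]
  intro ρ hρ
  by_cases hE : ham V ρ = E
  swap
  · filter_upwards [(isOpen_ne.preimage hcham).mem_nhds hE] with ρ' h' h
    exact h' h.1
  have hesc : Tendsto (fun t => ‖Φ t ρ‖) atTop atTop := by
    by_contra h
    exact hρ ⟨hE, h⟩
  obtain ⟨M, hM⟩ := hVsupp.exists_bound_of_continuous hV.continuous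
  have hxi : ∀ t, ‖(Φ t ρ).2‖ ≤ |E| + M + 1 := by
    intro t
    have h1 := ham_const V hV Φ hΦ ρ t
    rw [hE] at h1
    have h2 := hM (Φ t ρ).1
    rw [Real.norm_eq_abs] at h2
    unfold ham at h1
    have h3 := neg_abs_le (V (Φ t ρ).1)
    have h4 := le_abs_self E
    have h5 := abs_nonneg E
    have h6 := abs_nonneg (V (Φ t ρ).1)
    nlinarith [norm_nonneg (Φ t ρ).2]
  have hx : Tendsto (fun t => ‖(Φ t ρ).1‖) atTop atTop := by
    refine tendsto_atTop.2 fun b => ?_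
    filter_upwards [hesc.eventually_gt_atTop (max b (|E| + M + 1))] with t ht
    rw [Prod.norm_def, max_lt_iff, lt_max_iff, lt_max_iff] at ht
    rcases ht.2 with h | h
    · rcases ht.1 with h' | h'
      · exact h'.le
      · rcases ht.1 with h'' | _
        · exact h''.le
        · linarith [hxi t]
    · exact absurd h (not_lt.2 (hxi t))
  obtain ⟨T₀, hT₀⟩ := eventually_atTop.1
    ((hx.eventually_gt_atTop R).and (eventually_ge_atTop (0 : ℝ)))
  obtain ⟨T, hT, hTpos⟩ : ∃ T, T₀ ≤ T ∧ 0 < ⟪(Φ T ρ).1, (Φ T ρ).2⟫ := by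
    by_contra! hcon
    have hd : ∀ s, HasDerivAt (fun s => ‖(Φ s ρ).1‖ ^ 2)
        (2 * ⟪(Φ s ρ).1, (2 : ℝ) • (Φ s ρ).2⟫) s := by
      intro s
      have h1 : HasDerivAt (fun s => (Φ s ρ).1) _ s := (hΦ.2.2 ρ s).fst
      exact h1.norm_sq
    have hanti : AntitoneOn (fun s => ‖(Φ s ρ).1‖ ^ 2) (Ici T₀) := by
      refine antitoneOn_of_deriv_nonpos (convex_Ici _)
        (fun s _ => (hd s).continuousAt.continuousWithinAt)
        (fun s _ => (hd s).differentiableAt.differentiableWithinAt) (fun s hs => ?_)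
      rw [interior_Ici] at hs
      rw [(hd s).deriv, inner_smul_right]
      linarith [hcon s (le_of_lt hs)]
    obtain ⟨t, ht1, ht2⟩ := ((hx.eventually_gt_atTop ‖(Φ T₀ ρ).1‖).and
      (eventually_ge_atTop T₀)).exists
    have := hanti (mem_Ici.2 le_rfl) (mem_Ici.2 ht2) ht2
    have h0 := norm_nonneg (Φ T₀ ρ).1
    simp only at this
    nlinarith
  have hcT := flow_cont V hV hVsupp Φ hΦ T (hT₀ T hT).2
  have hopen1 : IsOpen {ρ' | R < ‖(Φ T ρ').1‖} := isOpen_lt (by fun_prop) (by fun_prop)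
  have hopen2 : IsOpen {ρ' | 0 < ⟪(Φ T ρ').1, (Φ T ρ').2⟫} :=
    isOpen_lt (by fun_prop) (by fun_prop)
  filter_upwards [hopen1.mem_nhds (hT₀ T hT).1, hopen2.mem_nhds hTpos] with ρ' ha hb hmem
  refine hmem.2 ?_
  have h1 := free_escape V hV hVsupp Φ hΦ R hR0 hR (Φ T ρ') ha hb
  have h2 := h1.comp (tendsto_atTop_add_const_right atTop (-T) tendsto_id)
  refine h2.congr fun t => ?_
  simp [← hΦ.2.1]

/-- Momentum reversal. -/
def revMom {n : ℕ} (ρ : Phase n) : Phase n := (ρ.1, -ρ.2)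

lemma rev_flow {n : ℕ} (V : EuclideanSpace ℝ (Fin n) → ℝ)
    (Φ : ℝ → Phase n → Phase n) (hΦ : IsHamFlow V Φ) :
    IsHamFlow V (fun t ρ => revMom (Φ (-t) (revMom ρ))) := by
  refine ⟨fun ρ => ?_, fun s t ρ => ?_, fun ρ t => ?_⟩
  · simp [hΦ.1, revMom]
  · have : revMom (revMom (Φ (-t) (revMom ρ))) = Φ (-t) (revMom ρ) := by simp [revMom]
    simp only [this]
    rw [← hΦ.2.1, neg_add]
  · have h := (hΦ.2.2 (revMom ρ) (-t)).scomp t (hasDerivAt_neg t)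
    have h1 : HasDerivAt (fun s => (Φ (-s) (revMom ρ)).1) _ t := h.fst
    have h2 : HasDerivAt (fun s => (Φ (-s) (revMom ρ)).2) _ t := h.snd
    refine (h1.prodMk h2.neg).congr_deriv ?_
    simp [hamVF, revMom]

/-- The outgoing and incoming tails are closed. -/
theorem gamma_closed (n : ℕ) (hn : 1 ≤ n)
    (V : EuclideanSpace ℝ (Fin n) → ℝ) (hV : ContDiff ℝ (⊤ : ℕ∞) V)
    (hVsupp : HasCompactSupport V)
    (Φ : ℝ → Phase n → Phase n) (hΦ : IsHamFlow V Φ)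
    (E : ℝ) (hE : 0 < E) :
    IsClosed (GammaMinus V Φ E) ∧ IsClosed (GammaPlus V Φ E) := by
  refine ⟨closed_minus V hV hVsupp Φ hΦ E, ?_⟩
  have h := closed_minus V hV hVsupp _ (rev_flow V Φ hΦ) E
  have hc : Continuous (revMom (n := n)) := by
    unfold revMom
    fun_prop
  have heq : GammaPlus V Φ E = revMom ⁻¹'
      (GammaMinus V (fun t ρ => revMom (Φ (-t) (revMom ρ))) E) := by
    ext ρ
    have h1 : ham V (revMom ρ) = ham V ρ := by simp [ham, revMom]
    have h2 : revMom (revMom ρ) = ρ := by simp [revMom]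
    have h3 : ∀ σ : Phase n, ‖revMom σ‖ = ‖σ‖ := by simp [revMom, Prod.norm_def]
    simp only [GammaPlus, GammaMinus, mem_preimage, mem_setOf_eq, h1, h2, h3]
    have h4 : Tendsto (fun t => ‖Φ t ρ‖) atBot atTop ↔
        Tendsto (fun t => ‖Φ (-t) ρ‖) atTop atTop := by
      constructor
      · intro h
        exact h.comp tendsto_neg_atTop_atBot
      · intro h
        have := h.comp tendsto_neg_atBot_atTop
        simpa [Function.comp_def] using this
    rw [h4]
  rw [heq]
  exact h.preimage hc
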